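/- Let A = K[x_1,…,x_s] and A_n its Hasse-Schmidt algebra of order n. For α = (α_i^j) ∈ ℕ^{s(n+1)}, set λ_α = Σ_{i,j} j·α_i^j and α̂ = (Σ_j α_1^j, …, Σ_j α_s^j) ∈ ℕ^s. If 0 ≤ λ_α ≤ l ≤ n, then as maps on K[x_1,…,x_s] one has (∂^α/∂x^α) ∘ d_l = d_{l−λ_α} ∘ (∂^{α̂}/∂x^{α̂}), where ∂^α/∂x^α = Π_{i,j} (∂/∂x_i^{(j)})^{α_i^j} and ∂^{α̂}/∂x^{α̂} = Π_i (∂/∂x_i)^{α̂_i}. -/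

import Mathlib

open MvPolynomial

/-- Iterated partial derivative `∂^α/∂x^α` on a multivariate polynomial ring. -/
noncomputable def multiPD {σ : Type*} [Fintype σ] [DecidableEq σ] {K : Type*} [CommSemiring K]
    (α : σ → ℕ) : MvPolynomial σ K → MvPolynomial σ K :=
  fun f => Finset.univ.toList.foldr
    (fun i g => (⇑(MvPolynomial.pderiv (R := K) i))^[α i] g) f

/-- The `l`-th component of the universal Hasse-Schmidt derivation of
`A = K[x_1,…,x_s]` of order `n`. -/
noncomputable def hsDs (K : Type*) [CommRing K] (s n l : ℕ) :
    MvPolynomial (Fin s) K → MvPolynomial (Fin s × Fin (n + 1)) K :=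
  fun f => Polynomial.coeff
    (MvPolynomial.aeval
      (fun i : Fin s =>
        ∑ j : Fin (n + 1),
          Polynomial.C (MvPolynomial.X (i, j) : MvPolynomial (Fin s × Fin (n + 1)) K) *
            Polynomial.X ^ (j : ℕ)) f) l

theorem pd_comm {σ K : Type*} [CommRing K] (i j : σ) (f : MvPolynomial σ K) :
    pderiv i (pderiv j f) = pderiv j (pderiv i f) := by
  classical
  have h : ⁅pderiv (R := K) i, pderiv (R := K) j⁆ = 0 := by
    apply MvPolynomial.derivation_ext
    intro k
    simp [Derivation.commutator_apply, pderiv_X, Pi.single_apply, apply_ite]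
  have := congrArg (fun D => D f) h
  simpa [Derivation.commutator_apply, sub_eq_zero] using this

theorem foldr_absorb {σ K : Type*} [DecidableEq σ] [CommRing K] (i : σ) (a : ℕ) (β : σ → ℕ)
    (f : MvPolynomial σ K) (L : List σ) (hL : L.Nodup) :
    L.foldr (fun k g => (⇑(pderiv (R := K) k))^[β k + if k = i then a else 0] g) f =
      if i ∈ L then (⇑(pderiv (R := K) i))^[a]
        (L.foldr (fun k g => (⇑(pderiv (R := K) k))^[β k] g) f)
      else L.foldr (fun k g => (⇑(pderiv (R := K) k))^[β k] g) f := by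
  induction L with
  | nil => simp
  | cons k L ih =>
    rw [List.nodup_cons] at hL
    simp only [List.foldr_cons, ih hL.2]
    by_cases hk : k = i
    · subst hk
      simp only [hL.1, List.mem_cons, true_or, if_true, if_false]
      rw [add_comm, Function.iterate_add_apply]
    · have hk' : ¬ i = k := fun h => hk h.symm
      simp only [hk, hk', List.mem_cons, false_or, if_false, add_zero]
      split_ifs
      · have hc : Function.Commute (⇑(pderiv (R := K) k)) (⇑(pderiv (R := K) i)) :=
          fun g => pd_comm k i g
        exact (hc.iterate_iterate (β k) a) _
      · rfl

theorem foldr_collect {K : Type*} [CommRing K] {σ τ : Type*} [Fintype σ] [DecidableEq σ]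
    (α : σ × τ → ℕ) (f : MvPolynomial σ K) (L : List (σ × τ)) :
    L.foldr (fun p g => (⇑(pderiv (R := K) p.1))^[α p] g) f =
      multiPD (fun i => (L.map fun p => if i = p.1 then α p else 0).sum) f := by
  induction L with
  | nil =>
    simp only [multiPD, List.foldr_nil, List.map_nil, List.sum_nil, Function.iterate_zero, id]
    induction (Finset.univ : Finset σ).toList with
    | nil => rfl
    | cons k L ih => simpa using ih
  | cons p L ih =>
    simp only [List.foldr_cons, ih, List.map_cons, List.sum_cons, multiPD]
    have := foldr_absorb p.1 (α p)
      (fun i => (L.map fun p => if i = p.1 then α p else 0).sum) f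
      Finset.univ.toList (Finset.nodup_toList _)
    rw [if_pos (by simp)] at this
    rw [← this]
    simp only [add_comm]

theorem deriv_coeff_mul {R A : Type*} [CommRing R] [CommRing A] [Algebra R A]
    (D : Derivation R A A) (P Q P' Q' : Polynomial A)
    (hP : ∀ l, D (P.coeff l) = P'.coeff l) (hQ : ∀ l, D (Q.coeff l) = Q'.coeff l) (l : ℕ) :
    D ((P * Q).coeff l) = (P' * Q + P * Q').coeff l := by
  simp only [Polynomial.coeff_add, Polynomial.coeff_mul, map_sum, Derivation.leibniz, hP, hQ,
    ← Finset.sum_add_distrib, smul_eq_mul]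
  exact Finset.sum_congr rfl fun x _ => by ring

theorem hs_base (K : Type*) [CommRing K] (s n : ℕ) (i : Fin s) (j : Fin (n + 1))
    (f : MvPolynomial (Fin s) K) : ∀ l : ℕ,
    pderiv (i, j) (hsDs K s n l f) =
      (Polynomial.X ^ (j : ℕ) * (MvPolynomial.aeval
      (fun i : Fin s =>
        ∑ j : Fin (n + 1),
          Polynomial.C (MvPolynomial.X (i, j) : MvPolynomial (Fin s × Fin (n + 1)) K) *
            Polynomial.X ^ (j : ℕ)) (pderiv i f))).coeff l := by
  unfold hsDs
  induction f using MvPolynomial.induction_on with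
  | C a =>
    intro l
    simp only [aeval_C, pderiv_C, map_zero, mul_zero, Polynomial.coeff_zero]
    rw [IsScalarTower.algebraMap_apply K (MvPolynomial (Fin s × Fin (n + 1)) K),
      Polynomial.algebraMap_apply, Polynomial.coeff_C]
    split_ifs <;> simp
  | add p q hp hq =>
    intro l
    simp only [map_add, Polynomial.coeff_add, mul_add, hp, hq]
  | mul_X p k hp =>
    intro l
    rw [map_mul, deriv_coeff_mul _ _ _ _ (if k = i then Polynomial.X ^ (j : ℕ) else 0) hp]
    · rw [Derivation.leibniz, pderiv_X]
      congr 1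
      by_cases hk : k = i
      · subst hk
        simp
        ring
      · simp [hk]
        ring
    · intro m
      rw [aeval_X, Polynomial.finsetSum_coeff, map_sum]
      simp only [Polynomial.coeff_C_mul, Polynomial.coeff_X_pow, mul_ite, mul_one, mul_zero,
        apply_ite (pderiv (R := K) (i, j)), map_zero, pderiv_X, Pi.single_apply, Prod.mk.injEq]
      by_cases hk : k = i
      · subst hk
        rw [Finset.sum_eq_single j]
        · simp [Polynomial.coeff_X_pow]
        · intro b _ hb
          simp [hb]
        · simp
      · simp [hk]

theorem hs_step (K : Type*) [CommRing K] (s n : ℕ) (p : Fin s × Fin (n + 1))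
    (f : MvPolynomial (Fin s) K) (l : ℕ) (h : (p.2 : ℕ) ≤ l) :
    pderiv p (hsDs K s n l f) = hsDs K s n (l - p.2) (pderiv p.1 f) := by
  rw [hs_base K s n p.1 p.2, Polynomial.coeff_X_pow_mul', if_pos h]
  rfl

theorem hs_iter (K : Type*) [CommRing K] (s n : ℕ) (p : Fin s × Fin (n + 1)) (a : ℕ) :
    ∀ (f : MvPolynomial (Fin s) K) (l : ℕ) (_ : (p.2 : ℕ) * a ≤ l),
    (⇑(pderiv (R := K) p))^[a] (hsDs K s n l f) =
      hsDs K s n (l - p.2 * a) ((⇑(pderiv (R := K) p.1))^[a] f) := by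
  induction a with
  | zero => simp
  | succ a ih =>
    intro f l h
    rw [mul_add, mul_one] at h
    rw [Function.iterate_succ_apply, Function.iterate_succ_apply, hs_step _ _ _ _ _ _ (by omega),
      ih _ _ (by omega), mul_add, mul_one, Nat.sub_sub]
    congr 1
    omega

theorem hs_list (K : Type*) [CommRing K] (s n : ℕ) (α : Fin s × Fin (n + 1) → ℕ) (l : ℕ)
    (f : MvPolynomial (Fin s) K) (L : List (Fin s × Fin (n + 1)))
    (h : (L.map fun p => (p.2 : ℕ) * α p).sum ≤ l) :
    L.foldr (fun p g => (⇑(pderiv (R := K) p))^[α p] g) (hsDs K s n l f) =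
      hsDs K s n (l - (L.map fun p => (p.2 : ℕ) * α p).sum)
        (L.foldr (fun p g => (⇑(pderiv (R := K) p.1))^[α p] g) f) := by
  induction L with
  | nil => simp
  | cons p L ih =>
    simp only [List.map_cons, List.sum_cons] at h
    simp only [List.map_cons, List.sum_cons, List.foldr_cons]
    rw [ih (by omega), hs_iter _ _ _ _ _ _ _ (by omega), Nat.sub_sub]
    congr 1
    omega

/-- For a multi-index `α ∈ ℕ^{s(n+1)}` with `λ_α = ∑_{i,j} j·α_i^j ≤ l ≤ n` and
`α̂_i = ∑_j α_i^j`, the operator identity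
`(∂^α/∂x^α) ∘ d_l = d_{l−λ_α} ∘ (∂^{α̂}/∂x^{α̂})` holds as maps on `K[x_1,…,x_s]`. -/
theorem multiPD_hsDs (K : Type*) [Field K] (s n : ℕ)
    (α : Fin s × Fin (n + 1) → ℕ) (l : ℕ)
    (hlam : (∑ p : Fin s × Fin (n + 1), (p.2 : ℕ) * α p) ≤ l) (hln : l ≤ n)
    (f : MvPolynomial (Fin s) K) :
    multiPD α (hsDs K s n l f) =
      hsDs K s n (l - ∑ p : Fin s × Fin (n + 1), (p.2 : ℕ) * α p)
        (multiPD (fun i : Fin s => ∑ j : Fin (n + 1), α (i, j)) f) := by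
  have h := hs_list K s n α l f Finset.univ.toList (by rwa [Finset.sum_map_toList])
  rw [Finset.sum_map_toList, foldr_collect] at h
  refine h.trans ?_
  congr 2
  funext i
  rw [Finset.sum_map_toList, Fintype.sum_prod_type, Finset.sum_eq_single i]
  · simp
  · intro b _ hb
    simp [hb.symm]
  · simp
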